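/- Let y ∈ V^n be a probability vector with positive components, let 1 < d < n−1 with y_1 > y_d and y_{d+1} > y_n (so that K_d(y) is nonempty), and let k be a positive integer. The following are equivalent: (1) for every x ∈ K_d(y) there exists a probability vector c of dimension at most k with positive components such that x⊗c ◁ y⊗c; (2) for every x ∈ K_d(y), x^{⊗k} ◁ y^{⊗k}; (3) y_d^k < y_1^{k−1} y_{d+1} and y_{d+1}^k > y_n^{k−1} y_d. -/

import Mathlib

noncomputable section

/-- `eSum x l` : the sum of the `l` largest components of `x`. -/
def eSum {n : ℕ} (x : Fin n → ℝ) (l : ℕ) : ℝ :=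
  sSup {r | ∃ s : Finset (Fin n), s.card = l ∧ r = ∑ i ∈ s, x i}

/-- `ESum x l` : the sum of the `l` smallest components of `x`. -/
def ESum {n : ℕ} (x : Fin n → ℝ) (l : ℕ) : ℝ :=
  sInf {r | ∃ s : Finset (Fin n), s.card = l ∧ r = ∑ i ∈ s, x i}

/-- Majorization `x ≺ y` (for vectors with equal total sum):
`e_l(x) ≤ e_l(y)` for all `1 ≤ l ≤ n`. -/
def Maj {n : ℕ} (x y : Fin n → ℝ) : Prop :=
  (∑ i, x i) = (∑ i, y i) ∧ ∀ l : ℕ, 1 ≤ l → l ≤ n → eSum x l ≤ eSum y l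

/-- Strict majorization `x ◁ y`: equal total sums and `e_l(x) < e_l(y)` for all
`1 ≤ l ≤ n - 1`. -/
def SMaj {n : ℕ} (x y : Fin n → ℝ) : Prop :=
  (∑ i, x i) = (∑ i, y i) ∧ ∀ l : ℕ, 1 ≤ l → l + 1 ≤ n → eSum x l < eSum y l

/-- Super-majorization `x ≺ʷ y` : `E_l(x) ≥ E_l(y)` for all `1 ≤ l ≤ n`. -/
def SupMaj {n : ℕ} (x y : Fin n → ℝ) : Prop :=
  ∀ l : ℕ, 1 ≤ l → l ≤ n → ESum y l ≤ ESum x l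

/-- Strict super-majorization `x ◁ʷ y` : `E_l(x) > E_l(y)` for all `1 ≤ l ≤ n`. -/
def SSupMaj {n : ℕ} (x y : Fin n → ℝ) : Prop :=
  ∀ l : ℕ, 1 ≤ l → l ≤ n → ESum y l < ESum x l

/-- Tensor product of two vectors: the vector of all pairwise products. -/
def tensor {m k : ℕ} (x : Fin m → ℝ) (c : Fin k → ℝ) : Fin (m * k) → ℝ :=
  fun i => x (finProdFinEquiv.symm i).1 * c (finProdFinEquiv.symm i).2

/-- `k`-fold tensor power of a vector. -/
def tpow {n : ℕ} (x : Fin n → ℝ) (k : ℕ) : Fin (n ^ k) → ℝ :=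
  fun i => ∏ j : Fin k, x (finFunctionFinEquiv.symm i j)

/-- `V^n` : probability vectors with components in non-increasing order. -/
def Vn (n : ℕ) : Set (Fin n → ℝ) :=
  {x | (∀ i, 0 ≤ x i) ∧ (∑ i, x i) = 1 ∧ Antitone x}

/-- `S(y)` : members of `V^n` majorized by `y`. -/
def Sset {n : ℕ} (y : Fin n → ℝ) : Set (Fin n → ℝ) :=
  {x ∈ Vn n | Maj x y}

/-- `T(y,c)` : members of `V^n` with `x ⊗ c ≺ y ⊗ c`. -/
def Tcat {n k : ℕ} (y : Fin n → ℝ) (c : Fin k → ℝ) : Set (Fin n → ℝ) :=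
  {x ∈ Vn n | Maj (tensor x c) (tensor y c)}

/-- Local uniformity `l_u(c)` : the minimum of the consecutive ratios `c_{i+1}/c_i`. -/
def lu {k : ℕ} (c : Fin k → ℝ) : ℝ :=
  sInf {r | ∃ i : ℕ, ∃ h : i + 1 < k, r = c ⟨i + 1, h⟩ / c ⟨i, Nat.lt_of_succ_lt h⟩}

/-- Global uniformity `g_u(c) = c_k / c_1` (smallest over largest component of a
non-increasingly ordered vector). -/
def gu {k : ℕ} (c : Fin k → ℝ) : ℝ :=
  if h : 0 < k then c ⟨k - 1, Nat.sub_lt h Nat.one_pos⟩ / c ⟨0, h⟩ else 1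

/-- Largest component. -/
def maxc {n : ℕ} (x : Fin n → ℝ) : ℝ := sSup (Set.range x)

/-- Smallest component. -/
def minc {n : ℕ} (x : Fin n → ℝ) : ℝ := sInf (Set.range x)

/-- `c'` is a (contiguous) segment of `c`. -/
def IsSegment {j k : ℕ} (c' : Fin j → ℝ) (c : Fin k → ℝ) : Prop :=
  ∃ (i : ℕ) (_h : i + j ≤ k), ∀ t : Fin j, c' t = c ⟨i + t, by have := t.isLt; omega⟩

/-- The first `d` components of a vector. -/
def take {n : ℕ} (x : Fin n → ℝ) (d : ℕ) (h : d ≤ n) : Fin d → ℝ :=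
  fun i => x ⟨i, Nat.lt_of_lt_of_le i.isLt h⟩

/-- The components of a vector after the first `d` ones. -/
def drop {n : ℕ} (x : Fin n → ℝ) (d : ℕ) : Fin (n - d) → ℝ :=
  fun i => x ⟨d + i, by have := i.isLt; omega⟩

/-- The segment `(c_i, …, c_j)` of `c` (`0`-based indices). -/
def seg {k : ℕ} (c : Fin k → ℝ) (i j : ℕ) (hij : i ≤ j) (hj : j < k) :
    Fin (j - i + 1) → ℝ :=
  fun t => c ⟨i + t, by have := t.isLt; omega⟩

/-- `(c_i, …, c_j)` is a block of the decomposition `[c]_α` of the (positive,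
non-increasingly ordered) vector `c` according to `α`: ratios within the block
exceed `α`, and the ratios at the two boundaries of the block are `≤ α`
(or the block touches an end of `c`). -/
def IsBlock {k : ℕ} (α : ℝ) (c : Fin k → ℝ) (i j : ℕ) : Prop :=
  ∃ (hij : i ≤ j) (hj : j < k),
    (i = 0 ∨ c ⟨i, by omega⟩ / c ⟨i - 1, by omega⟩ ≤ α) ∧
    (j = k - 1 ∨ ∃ hj1 : j + 1 < k, c ⟨j + 1, hj1⟩ / c ⟨j, hj⟩ ≤ α) ∧
    (∀ (t : ℕ) (ht1 : i ≤ t) (ht2 : t < j), α < c ⟨t + 1, by omega⟩ / c ⟨t, by omega⟩)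

/-- `T_k(y)` : states transformable to `y` with a `k`-dimensional catalyst. -/
def Tk {n : ℕ} (k : ℕ) (y : Fin n → ℝ) : Set (Fin n → ℝ) :=
  {x ∈ Vn n | ∃ c : Fin k → ℝ, (∀ i, 0 < c i) ∧ (∑ i, c i) = 1 ∧ Antitone c ∧
    Maj (tensor x c) (tensor y c)}

/-- `M_k(y)` : states `x` with `x^{⊗k} ≺ y^{⊗k}`. -/
def Mk {n : ℕ} (k : ℕ) (y : Fin n → ℝ) : Set (Fin n → ℝ) :=
  {x ∈ Vn n | Maj (tpow x k) (tpow y k)}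

/-- `T(y)` : states transformable to `y` with some catalyst. -/
def Tinf {n : ℕ} (y : Fin n → ℝ) : Set (Fin n → ℝ) :=
  {x ∈ Vn n | ∃ (k : ℕ) (c : Fin k → ℝ), 0 < k ∧ (∀ i, 0 < c i) ∧ (∑ i, c i) = 1 ∧
    Antitone c ∧ Maj (tensor x c) (tensor y c)}

/-- `M(y)` : states `x` with `x^{⊗k} ≺ y^{⊗k}` for some `k ≥ 1`. -/
def Minf {n : ℕ} (y : Fin n → ℝ) : Set (Fin n → ℝ) :=
  {x ∈ Vn n | ∃ k : ℕ, 1 ≤ k ∧ Maj (tpow x k) (tpow y k)}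

/-- `S^λ(y)` : states `x` with `x ≺ʷ λ y`. -/
def Slam {n : ℕ} (lam : ℝ) (y : Fin n → ℝ) : Set (Fin n → ℝ) :=
  {x ∈ Vn n | SupMaj x (fun i => lam * y i)}

/-- `T^λ(y,c)` : states `x` with `x ⊗ c ≺ʷ λ (y ⊗ c)`. -/
def Tlamc {n k : ℕ} (lam : ℝ) (y : Fin n → ℝ) (c : Fin k → ℝ) : Set (Fin n → ℝ) :=
  {x ∈ Vn n | SupMaj (tensor x c) (fun i => lam * tensor y c i)}

/-- `T_k^λ(y)`. -/
def Tklam {n : ℕ} (k : ℕ) (lam : ℝ) (y : Fin n → ℝ) : Set (Fin n → ℝ) :=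
  {x ∈ Vn n | ∃ c : Fin k → ℝ, (∀ i, 0 < c i) ∧ (∑ i, c i) = 1 ∧ Antitone c ∧
    SupMaj (tensor x c) (fun i => lam * tensor y c i)}

/-- `M_k^λ(y)`. -/
def Mklam {n : ℕ} (k : ℕ) (lam : ℝ) (y : Fin n → ℝ) : Set (Fin n → ℝ) :=
  {x ∈ Vn n | SupMaj (tpow x k) (fun i => lam ^ k * tpow y k i)}

/-- `T^λ(y)`. -/
def Tlaminf {n : ℕ} (lam : ℝ) (y : Fin n → ℝ) : Set (Fin n → ℝ) :=
  {x ∈ Vn n | ∃ (k : ℕ) (c : Fin k → ℝ), 0 < k ∧ (∀ i, 0 < c i) ∧ (∑ i, c i) = 1 ∧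
    Antitone c ∧ SupMaj (tensor x c) (fun i => lam * tensor y c i)}

/-- `M^λ(y)`. -/
def Mlaminf {n : ℕ} (lam : ℝ) (y : Fin n → ℝ) : Set (Fin n → ℝ) :=
  {x ∈ Vn n | ∃ k : ℕ, 1 ≤ k ∧ SupMaj (tpow x k) (fun i => lam ^ k * tpow y k i)}

/-- `K_d(y)` : concatenations `x = x' ⊕ x''` with `x' ◁ y'` and `x'' ◁ y''`,
where `y'` is the first-`d` part of `y` and `y''` the rest. -/
def Kd {n : ℕ} (y : Fin n → ℝ) (d : ℕ) (h : d ≤ n) : Set (Fin n → ℝ) :=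
  {x ∈ Vn n | SMaj (take x d h) (take y d h) ∧ SMaj (drop x d) (drop y d)}

/-- `y(d)` : first `d` components equal to `e_d(y)/d`, the last `n-d` equal to
`(1 - e_d(y))/(n-d)`. -/
def yvec {n : ℕ} (y : Fin n → ℝ) (d : ℕ) : Fin n → ℝ :=
  fun i => if (i : ℕ) < d then eSum y d / d else (1 - eSum y d) / (n - d)

/-- `K_d^λ(y)` : states `x ∈ S^λ(y)` with `E_l(x) = λ E_l(y)` iff `l = n - d`. -/
def Kdlam {n : ℕ} (lam : ℝ) (y : Fin n → ℝ) (d : ℕ) : Set (Fin n → ℝ) :=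
  {x ∈ Vn n | SupMaj x (fun i => lam * y i) ∧
    ∀ l : ℕ, 1 ≤ l → l ≤ n → (ESum x l = lam * ESum y l ↔ l = n - d)}

/-!
For `x ∈ K_d(y)` every lower set of indices has at most as large an `x`-sum as `y`-sum, with
equality exactly for unions of the two blocks. Slicing a lower set of the product order shows that
`x ⊗ c` against `y ⊗ c`, and `x^{⊗k}` against `y^{⊗k}`, inherit this. Among the largest components
of the product of `x` one can choose a lower set `S`, so strict majorization follows as soon as no
proper nonempty union `S` of blocks consists of the largest components of the product of `y`; for
the same reason it fails if there is such an `S`.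

Under (3) there is a ratio `r < 1` with `y_d < r y_1`, `y_n < r y_{d+1}` and
`r^{k-1} y_d < y_{d+1}`. Starting from the largest component, these inequalities lead from block to
block through the whole product, both for the geometric catalyst `1, r, …, r^{k-1}` and for the
tensor power. Conversely, if one inequality in (3) fails, then the products in the first block, up
to a suitable place, form a union of blocks made of the largest components.
-/

/-! ### Sums of the largest components -/

section LargestComponents

variable {ι : Type*} {N : ℕ} (e : ι ≃ Fin N)

lemma sum_le_eSum (X : ι → ℝ) (S : Finset ι) : ∑ p ∈ S, X p ≤ eSum (X ∘ e.symm) S.card := by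
  refine le_csSup ?_ ⟨S.map e.toEmbedding, by simp, by simp⟩
  refine ((Set.finite_range fun s : Finset (Fin N) => ∑ i ∈ s, (X ∘ e.symm) i).subset ?_).bddAbove
  rintro _ ⟨s, -, rfl⟩
  exact ⟨s, rfl⟩

lemma sum_le_sum_of_card_eq {X : ι → ℝ} {S T : Finset ι} (hcard : T.card = S.card)
    (hS : ∀ p ∈ S, ∀ q ∉ S, X q ≤ X p) : ∑ p ∈ T, X p ≤ ∑ p ∈ S, X p := by
  classical
  refine Finset.sum_sdiff_le_sum_sdiff.1 ?_
  let f := Finset.equivOfCardEq (Finset.card_sdiff_comm hcard)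
  rw [← Finset.sum_coe_sort (T \ S), ← Finset.sum_coe_sort (S \ T), ← Equiv.sum_comp f]
  exact Finset.sum_le_sum fun p _ =>
    hS _ (Finset.mem_sdiff.1 (f p).2).1 _ (Finset.mem_sdiff.1 p.2).2

lemma eSum_eq_sum {X : ι → ℝ} {S : Finset ι} (hS : ∀ p ∈ S, ∀ q ∉ S, X q ≤ X p) :
    eSum (X ∘ e.symm) S.card = ∑ p ∈ S, X p := by
  refine le_antisymm (csSup_le ⟨_, S.map e.toEmbedding, by simp, rfl⟩ ?_) (sum_le_eSum e X S)
  rintro _ ⟨s, hs, rfl⟩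
  simpa using sum_le_sum_of_card_eq (T := s.map e.symm.toEmbedding) (by simpa using hs) hS

lemma sum_lt_eSum {X : ι → ℝ} {S : Finset ι} {p q : ι} (hp : p ∈ S) (hq : q ∉ S)
    (hpq : X p < X q) : ∑ r ∈ S, X r < eSum (X ∘ e.symm) S.card := by
  classical
  have hq' : q ∉ S.erase p := fun h => hq (Finset.mem_of_mem_erase h)
  have hcard : (insert q (S.erase p)).card = S.card := by
    rw [Finset.card_insert_of_notMem hq', Finset.card_erase_add_one hp]
  calc ∑ r ∈ S, X r < ∑ r ∈ insert q (S.erase p), X r := by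
        rw [Finset.sum_insert hq', ← Finset.add_sum_erase S X hp]
        gcongr
    _ ≤ eSum (X ∘ e.symm) S.card := hcard ▸ sum_le_eSum e X _

end LargestComponents

lemma exists_card_eq_forall_le {ι α : Type*} [Fintype ι] [LinearOrder α] (f : ι → α) {l : ℕ}
    (hl : l ≤ Fintype.card ι) : ∃ S : Finset ι, S.card = l ∧ ∀ p ∈ S, ∀ q ∉ S, f p ≤ f q := by
  classical
  induction l with
  | zero => exact ⟨∅, rfl, by simp⟩
  | succ l ih =>
    obtain ⟨S, hcard, hS⟩ := ih (by omega)
    have hne : Sᶜ.Nonempty := Finset.card_pos.1 (by rw [Finset.card_compl]; omega)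
    obtain ⟨m, hm, hmin⟩ := Finset.exists_min_image Sᶜ f hne
    rw [Finset.mem_compl] at hm
    refine ⟨insert m S, by rw [Finset.card_insert_of_notMem hm, hcard], fun p hp q hq => ?_⟩
    rw [Finset.mem_insert, not_or] at hq
    rcases Finset.mem_insert.1 hp with rfl | hp
    · exact hmin q (Finset.mem_compl.2 hq.2)
    · exact hS p hp q hq.2

lemma exists_isLowerSet_card_eq {ι : Type*} [Fintype ι] [PartialOrder ι] {X : ι → ℝ}
    (hX : Antitone X) {l : ℕ} (hl : l ≤ Fintype.card ι) :
    ∃ S : Finset ι, IsLowerSet (S : Set ι) ∧ S.card = l ∧ ∀ p ∈ S, ∀ q ∉ S, X q ≤ X p := by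
  -- A linear extension of the order breaks the ties of `X`.
  let f : ι → ℝᵒᵈ ×ₗ LinearExtension ι := fun p =>
    toLex (OrderDual.toDual (X p), toLinearExtension p)
  have hf : Monotone f := fun p q hpq =>
    Prod.Lex.toLex_mono ⟨OrderDual.toDual_le_toDual.2 (hX hpq), toLinearExtension.monotone hpq⟩
  have hfinj : Function.Injective f := fun p q hpq => (Prod.ext_iff.1 (toLex.injective hpq)).2
  obtain ⟨S, hcard, hS⟩ := exists_card_eq_forall_le f hl
  refine ⟨S, fun q p hpq hq => ?_, hcard, fun p hp q hq => ?_⟩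
  · by_contra hp
    exact hp (hfinj ((hf hpq).antisymm (hS q hq p hp)) ▸ hq)
  · exact OrderDual.toDual_le_toDual.1 (Prod.Lex.monotone_fst _ _ (hS p hp q hq))

/-! ### Majorization inside blocks -/

/-- `S` is a union of fibres of `π`. The fibres of `π` are the blocks within which `x ∈ K_d(y)` is
compared with `y`. -/
def IsSaturated {ι β : Type*} (π : ι → β) (S : Finset ι) : Prop :=
  ∀ ⦃i j⦄, π i = π j → i ∈ S → j ∈ S

/-- Strict majorization of `x` by `y` inside each fibre of `π`, tested on the lower sets of the
index type: these are summed at most as high by `x` as by `y`, with equality exactly on the unions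
of fibres. Unlike `SMaj`, this relation passes to tensor products and tensor powers. -/
structure BlockMaj {ι β : Type*} [Preorder ι] (π : ι → β) (x y : ι → ℝ) : Prop where
  sum_le : ∀ S : Finset ι, IsLowerSet (S : Set ι) → ∑ i ∈ S, x i ≤ ∑ i ∈ S, y i
  isSaturated : ∀ S : Finset ι, IsLowerSet (S : Set ι) → ∑ i ∈ S, x i = ∑ i ∈ S, y i →
    IsSaturated π S
  sum_eq : ∀ S : Finset ι, IsSaturated π S → ∑ i ∈ S, x i = ∑ i ∈ S, y i

lemma isSaturated_univ {ι β : Type*} [Fintype ι] (π : ι → β) : IsSaturated π Finset.univ :=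
  fun _ _ _ _ => Finset.mem_univ _

section BlockMaj

variable {ι β : Type*} {N : ℕ} {π : ι → β} {x y : ι → ℝ}

lemma BlockMaj.sMaj [PartialOrder ι] (h : BlockMaj π x y) (hx : Antitone x) (e : ι ≃ Fin N)
    (hS : ∀ S : Finset ι, IsLowerSet (S : Set ι) → IsSaturated π S → S.Nonempty →
      (∀ p ∈ S, ∀ q, y p < y q → q ∈ S) → ∀ p, p ∈ S) :
    SMaj (x ∘ e.symm) (y ∘ e.symm) := by
  have := Fintype.ofEquiv _ e.symm
  refine ⟨?_, fun l hl1 hlN => ?_⟩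
  · simpa [e.symm.sum_comp x, e.symm.sum_comp y] using h.sum_eq _ (isSaturated_univ π)
  have hN : Fintype.card ι = N := by simpa using Fintype.card_congr e
  obtain ⟨S, hlow, rfl, hmax⟩ := exists_isLowerSet_card_eq hx (l := l) (by omega)
  rw [eSum_eq_sum e hmax]
  have hle : ∑ i ∈ S, x i ≤ ∑ i ∈ S, y i := h.sum_le S hlow
  rcases hle.lt_or_eq with hlt | heq
  · exact hlt.trans_le (sum_le_eSum e y S)
  have hne : S ≠ Finset.univ := by
    rintro rfl
    rw [Finset.card_univ] at hlN
    omega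
  obtain ⟨p, hp, q, hpq, hq⟩ : ∃ p ∈ S, ∃ q, y p < y q ∧ q ∉ S := by
    by_contra! hcon
    exact hne (Finset.eq_univ_of_forall
      (hS S hlow (h.isSaturated S hlow heq) (Finset.card_pos.1 hl1) hcon))
  exact hle.trans_lt (sum_lt_eSum e hp hq hpq)

lemma BlockMaj.exists_lt_of_sMaj [Preorder ι] (h : BlockMaj π x y) {e : ι ≃ Fin N}
    (hxy : SMaj (x ∘ e.symm) (y ∘ e.symm)) {P : ι → Prop} (hP : ∀ i j, π i = π j → P i → P j)
    {p q : ι} (hp : P p) (hq : ¬ P q) : ∃ i, P i ∧ ∃ j, ¬ P j ∧ y i < y j := by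
  classical
  by_contra! hcon
  have := Fintype.ofEquiv _ e.symm
  let S := Finset.univ.filter P
  have hmem {i : ι} : i ∈ S ↔ P i := Finset.mem_filter_univ i
  have hmax : ∀ i ∈ S, ∀ j ∉ S, y j ≤ y i := by simpa only [hmem] using hcon
  have hS : IsSaturated π S := by simpa only [IsSaturated, hmem] using hP
  have hcard : S.card < N := by
    simpa [Fintype.card_congr e] using Finset.card_lt_univ_of_notMem (mt hmem.1 hq)
  have hlt := hxy.2 S.card (Finset.card_pos.2 ⟨p, hmem.2 hp⟩) hcard
  rw [eSum_eq_sum e hmax, ← h.sum_eq S hS] at hlt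
  exact hlt.not_ge (sum_le_eSum e x S)

end BlockMaj

section Product

variable {ι κ β : Type*}

/-- The outer product of two families; `tensor` is its enumeration by `finProdFinEquiv`. -/
def outer (u : ι → ℝ) (v : κ → ℝ) : ι × κ → ℝ :=
  fun p => u p.1 * v p.2

/-- The section of a set of pairs at a given second component. -/
def slice (S : Finset (ι × κ)) (c : κ) : Finset ι :=
  S.preimage (·, c) (Prod.mk_left_injective c).injOn

lemma mem_slice {S : Finset (ι × κ)} {c : κ} {i : ι} : i ∈ slice S c ↔ (i, c) ∈ S :=
  Finset.mem_preimage

lemma isLowerSet_slice [Preorder ι] [Preorder κ] {S : Finset (ι × κ)}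
    (hS : IsLowerSet (S : Set (ι × κ))) (c : κ) : IsLowerSet (slice S c : Set ι) := by
  intro i i' hle hi
  rw [Finset.mem_coe, mem_slice] at hi ⊢
  exact hS (Prod.mk_le_mk.2 ⟨hle, le_rfl⟩) hi

lemma antitone_outer [Preorder ι] [Preorder κ] {x : ι → ℝ} {c : κ → ℝ} (hx : Antitone x)
    (hx0 : ∀ i, 0 ≤ x i) (hc : Antitone c) (hc0 : ∀ j, 0 ≤ c j) : Antitone (outer x c) :=
  fun _ q hpq => mul_le_mul (hx hpq.1) (hc hpq.2) (hc0 q.2) (hx0 _)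

lemma isSaturated_prodMap_id_iff {π : ι → β} {S : Finset (ι × κ)} :
    IsSaturated (Prod.map π (id : κ → κ)) S ↔ ∀ c, IsSaturated π (slice S c) := by
  constructor
  · intro hS c i i' hπ hi
    rw [mem_slice] at hi ⊢
    exact hS (by simp [hπ]) hi
  · rintro hS ⟨i, c⟩ ⟨i', c'⟩ hπ hi
    obtain ⟨hi', rfl⟩ : π i = π i' ∧ c = c' := by simpa using hπ
    exact mem_slice.1 (hS c hi' (mem_slice.2 hi))

variable {u u' : ι → ℝ} {v : κ → ℝ} {S : Finset (ι × κ)}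

lemma sum_outer [DecidableEq κ] (u : ι → ℝ) (v : κ → ℝ) (S : Finset (ι × κ)) :
    ∑ p ∈ S, outer u v p = ∑ c ∈ S.image Prod.snd, (∑ i ∈ slice S c, u i) * v c := by
  simp only [Finset.sum_mul]
  refine Finset.sum_finset_product_right S (S.image Prod.snd) (slice S) fun p => ?_
  rw [mem_slice, iff_and_self]
  exact Finset.mem_image_of_mem Prod.snd

lemma sum_outer_le_sum_outer (hv : ∀ c, 0 ≤ v c)
    (h : ∀ c, ∑ i ∈ slice S c, u i ≤ ∑ i ∈ slice S c, u' i) :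
    ∑ p ∈ S, outer u v p ≤ ∑ p ∈ S, outer u' v p := by
  classical
  rw [sum_outer, sum_outer]
  exact Finset.sum_le_sum fun c _ => mul_le_mul_of_nonneg_right (h c) (hv c)

lemma sum_slice_eq_of_sum_outer_eq (hv : ∀ c, 0 < v c)
    (h : ∀ c, ∑ i ∈ slice S c, u i ≤ ∑ i ∈ slice S c, u' i)
    (heq : ∑ p ∈ S, outer u v p = ∑ p ∈ S, outer u' v p) (c : κ) :
    ∑ i ∈ slice S c, u i = ∑ i ∈ slice S c, u' i := by
  classical
  rcases (slice S c).eq_empty_or_nonempty with hempty | ⟨i, hi⟩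
  · rw [hempty, Finset.sum_empty, Finset.sum_empty]
  rw [sum_outer, sum_outer, Finset.sum_eq_sum_iff_of_le
    fun c _ => mul_le_mul_of_nonneg_right (h c) (hv c).le] at heq
  exact mul_right_cancel₀ (hv c).ne'
    (heq c (Finset.mem_image_of_mem Prod.snd (mem_slice.1 hi)))

lemma BlockMaj.outer_right [Preorder ι] [Preorder κ] {π : ι → β} {x y : ι → ℝ}
    (h : BlockMaj π x y) (hv : ∀ c, 0 < v c) :
    BlockMaj (Prod.map π (id : κ → κ)) (outer x v) (outer y v) where
  sum_le S hS := sum_outer_le_sum_outer (fun c => (hv c).le)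
    fun c => h.sum_le _ (isLowerSet_slice hS c)
  isSaturated S hS heq := isSaturated_prodMap_id_iff.2 fun c =>
    h.isSaturated _ (isLowerSet_slice hS c) <| sum_slice_eq_of_sum_outer_eq hv
      (fun c => h.sum_le _ (isLowerSet_slice hS c)) heq c
  sum_eq S hS := by
    classical
    rw [sum_outer, sum_outer]
    exact Finset.sum_congr rfl fun c _ => by rw [h.sum_eq _ (isSaturated_prodMap_id_iff.1 hS c)]

end Product

section Power

variable {ι κ : Type*}

/-- The product `f ↦ ∏ j, z j (f j)` of the families `z j`; `tpow x k` is the enumeration of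
`piProd fun _ => x` by `finFunctionFinEquiv`. -/
def piProd [Fintype κ] (z : κ → ι → ℝ) : (κ → ι) → ℝ :=
  fun f => ∏ j, z j (f j)

lemma antitone_piProd [Fintype κ] [Preorder ι] {z : κ → ι → ℝ} (hz : ∀ j, Antitone (z j))
    (hz0 : ∀ j i, 0 ≤ z j i) : Antitone (piProd z) :=
  fun _ _ hfg => Finset.prod_le_prod (fun _ _ => hz0 _ _) fun j _ => hz j (hfg j)

lemma piProd_const_le [Preorder ι] [OrderBot ι] {x : ι → ℝ} (hx : Antitone x)
    (hx0 : ∀ i, 0 ≤ x i) {K : ℕ} (f : Fin (K + 1) → ι) (m : Fin (K + 1)) :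
    piProd (fun _ => x) f ≤ x ⊥ ^ K * x (f m) := by
  rw [piProd, Fin.prod_univ_succAbove _ m, mul_comm]
  refine mul_le_mul_of_nonneg_right ?_ (hx0 _)
  calc ∏ i, x (f (m.succAbove i)) ≤ ∏ _i : Fin K, x ⊥ :=
        Finset.prod_le_prod (fun _ _ => hx0 _) fun _ _ => hx bot_le
    _ = x ⊥ ^ K := by simp

lemma le_piProd_const [Preorder ι] [OrderTop ι] {x : ι → ℝ} (hx : Antitone x)
    (hx0 : ∀ i, 0 ≤ x i) {K : ℕ} (f : Fin (K + 1) → ι) (m : Fin (K + 1)) :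
    x ⊤ ^ K * x (f m) ≤ piProd (fun _ => x) f := by
  rw [piProd, Fin.prod_univ_succAbove _ m, mul_comm (x (f m))]
  refine mul_le_mul_of_nonneg_right ?_ (hx0 _)
  calc x ⊤ ^ K = ∏ _i : Fin K, x ⊤ := by simp
    _ ≤ ∏ i, x (f (m.succAbove i)) := Finset.prod_le_prod (fun _ _ => hx0 _) fun _ _ => hx le_top

variable [DecidableEq κ]

/-- The values that the coordinate `m` of an element of `S` can take when `g` lists its other
coordinates. -/
def line (S : Finset (κ → ι)) (m : κ) (g : {j // j ≠ m} → ι) : Finset ι :=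
  slice (S.map (Equiv.funSplitAt m ι).toEmbedding) g

lemma mem_line {S : Finset (κ → ι)} {m : κ} {g : {j // j ≠ m} → ι} {i : ι} :
    i ∈ line S m g ↔ (Equiv.funSplitAt m ι).symm (i, g) ∈ S := by
  simp [line, mem_slice, Finset.mem_map_equiv]

lemma mem_line_restrict {S : Finset (κ → ι)} {m : κ} {f : κ → ι} {i : ι} :
    i ∈ line S m (fun j => f j) ↔ Function.update f m i ∈ S := by
  rw [mem_line]
  congr!

lemma isLowerSet_line [Preorder ι] {S : Finset (κ → ι)} (hS : IsLowerSet (S : Set (κ → ι)))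
    (m : κ) (g : {j // j ≠ m} → ι) : IsLowerSet (line S m g : Set ι) := by
  intro i i' hle hi
  rw [Finset.mem_coe, mem_line] at hi ⊢
  refine hS (fun j => ?_) hi
  rw [Equiv.funSplitAt_symm_apply, Equiv.funSplitAt_symm_apply]
  split_ifs
  exacts [hle, le_rfl]

lemma isSaturated_pi_iff [Finite κ] {β : Type*} {π : κ → ι → β} {S : Finset (κ → ι)} :
    IsSaturated (fun f j => π j (f j)) S ↔ ∀ m g, IsSaturated (π m) (line S m g) := by
  constructor
  · intro hS m g i i' hπ hi
    rw [mem_line] at hi ⊢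
    refine hS (funext fun j => ?_) hi
    beta_reduce
    rw [Equiv.funSplitAt_symm_apply, Equiv.funSplitAt_symm_apply]
    split_ifs with hj
    exacts [hj ▸ hπ, rfl]
  · intro hS f g hπ hf
    have := Fintype.ofFinite κ
    have hpiecewise (t : Finset κ) : t.piecewise g f ∈ S := by
      induction t using Finset.induction_on with
      | empty => rwa [Finset.piecewise_empty]
      | insert m t hm ih =>
        rw [Finset.piecewise_insert, ← mem_line_restrict]
        refine hS m _ (congrFun hπ m) (mem_line_restrict.2 ?_)
        rwa [← Finset.piecewise_eq_of_notMem t g f hm, Function.update_eq_self]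
    simpa using hpiecewise Finset.univ

variable [Fintype κ] {x y z : κ → ι → ℝ} {u v : ι → ℝ} {S : Finset (κ → ι)} {m : κ}

lemma sum_piProd_update (z : κ → ι → ℝ) (m : κ) (u : ι → ℝ) (S : Finset (κ → ι)) :
    ∑ f ∈ S, piProd (Function.update z m u) f =
      ∑ p ∈ S.map (Equiv.funSplitAt m ι).toEmbedding,
        outer u (fun g => ∏ j : {j // j ≠ m}, z j (g j)) p := by
  rw [Finset.sum_map]
  refine Finset.sum_congr rfl fun f _ => ?_
  rw [piProd, Fintype.prod_eq_mul_prod_subtype_ne _ m, Function.update_self]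
  refine congrArg _ (Finset.prod_congr rfl fun j _ => ?_)
  rw [Function.update_of_ne j.2]
  rfl

lemma sum_piProd_update_le (hz : ∀ j i, 0 ≤ z j i)
    (h : ∀ g, ∑ i ∈ line S m g, u i ≤ ∑ i ∈ line S m g, v i) :
    ∑ f ∈ S, piProd (Function.update z m u) f ≤ ∑ f ∈ S, piProd (Function.update z m v) f := by
  rw [sum_piProd_update, sum_piProd_update]
  exact sum_outer_le_sum_outer (fun _ => Finset.prod_nonneg fun _ _ => hz _ _) h

lemma sum_line_eq_of_sum_piProd_update_eq (hz : ∀ j i, 0 < z j i)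
    (h : ∀ g, ∑ i ∈ line S m g, u i ≤ ∑ i ∈ line S m g, v i)
    (heq : ∑ f ∈ S, piProd (Function.update z m u) f =
      ∑ f ∈ S, piProd (Function.update z m v) f) (g : {j // j ≠ m} → ι) :
    ∑ i ∈ line S m g, u i = ∑ i ∈ line S m g, v i := by
  rw [sum_piProd_update, sum_piProd_update] at heq
  exact sum_slice_eq_of_sum_outer_eq (fun _ => Finset.prod_pos fun _ _ => hz _ _) h heq g

lemma sum_piProd_le (hx : ∀ j i, 0 ≤ x j i) (hy : ∀ j i, 0 ≤ y j i)
    (h : ∀ m g, ∑ i ∈ line S m g, x m i ≤ ∑ i ∈ line S m g, y m i) :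
    ∑ f ∈ S, piProd x f ≤ ∑ f ∈ S, piProd y f := by
  have hpiecewise (t : Finset κ) :
      ∑ f ∈ S, piProd x f ≤ ∑ f ∈ S, piProd (t.piecewise y x) f := by
    induction t using Finset.induction_on with
    | empty => rw [Finset.piecewise_empty]
    | insert m t hm ih =>
      have hz (j : κ) (i : ι) : 0 ≤ t.piecewise y x j i :=
        t.piecewise_cases y x (fun w => 0 ≤ w i) (hy j i) (hx j i)
      calc ∑ f ∈ S, piProd x f ≤ ∑ f ∈ S, piProd (t.piecewise y x) f := ih
        _ = ∑ f ∈ S, piProd (Function.update (t.piecewise y x) m (x m)) f := by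
          rw [← Finset.piecewise_eq_of_notMem t y x hm, Function.update_eq_self]
        _ ≤ ∑ f ∈ S, piProd ((insert m t).piecewise y x) f := by
          rw [Finset.piecewise_insert]
          exact sum_piProd_update_le hz (h m)
  simpa using hpiecewise Finset.univ

end Power

lemma BlockMaj.piProd_of_pos {ι κ β : Type*} [Fintype κ] [Preorder ι] {π : κ → ι → β}
    {x y : κ → ι → ℝ} (h : ∀ j, BlockMaj (π j) (x j) (y j))
    (hx : ∀ j i, 0 < x j i) (hy : ∀ j i, 0 ≤ y j i) :
    BlockMaj (fun f j => π j (f j)) (piProd x) (piProd y) where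
  sum_le S hS := by
    classical
    exact sum_piProd_le (fun j i => (hx j i).le) hy
      fun m g => (h m).sum_le _ (isLowerSet_line hS m g)
  isSaturated S hS heq := by
    classical
    have hle (m : κ) (g) : ∑ i ∈ line S m g, x m i ≤ ∑ i ∈ line S m g, y m i :=
      (h m).sum_le _ (isLowerSet_line hS m g)
    refine isSaturated_pi_iff.2 fun m g => (h m).isSaturated _ (isLowerSet_line hS m g) ?_
    refine sum_line_eq_of_sum_piProd_update_eq hx (hle m) (le_antisymm ?_ ?_) g
    · exact sum_piProd_update_le (fun j i => (hx j i).le) (hle m)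
    · rw [Function.update_eq_self, heq]
      refine sum_piProd_le (fun j i => ?_) hy fun m' g => ?_
      · rcases eq_or_ne j m with rfl | hj
        · simpa using hy j i
        · simpa [hj] using (hx j i).le
      · rcases eq_or_ne m' m with rfl | hm
        · simp
        · simpa [hm] using hle m' g
  sum_eq S hS := by
    classical
    have heq (m : κ) (g) := (h m).sum_eq _ (isSaturated_pi_iff.1 hS m g)
    have hx' (j : κ) (i : ι) : 0 ≤ x j i := (hx j i).le
    exact le_antisymm (sum_piProd_le hx' hy fun m g => (heq m g).le)
      (sum_piProd_le hy hx' fun m g => (heq m g).ge)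

section Blocks

variable {ι ι₁ ι₂ β β₁ β₂ : Type*}

lemma SMaj.blockMaj {m : ℕ} {z w : Fin m → ℝ} (h : SMaj z w) (hw : Antitone w) :
    BlockMaj (fun _ => ()) z w := by
  have hlt (S : Finset (Fin m)) (hS : IsLowerSet (S : Set (Fin m))) (hne : S.Nonempty)
      (huniv : S ≠ Finset.univ) : ∑ i ∈ S, z i < ∑ i ∈ S, w i := by
    have hcard : S.card < m := by simpa using (Finset.card_lt_iff_ne_univ S).2 huniv
    have hmax : ∀ p ∈ S, ∀ q ∉ S, w q ≤ w p := fun p hp q hq =>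
      hw (le_of_not_ge fun hqp => hq (hS hqp hp))
    calc ∑ i ∈ S, z i ≤ eSum z S.card := sum_le_eSum (Equiv.refl _) z S
      _ < eSum w S.card := h.2 _ (Finset.card_pos.2 hne) hcard
      _ = ∑ i ∈ S, w i := eSum_eq_sum (Equiv.refl _) hmax
  refine ⟨fun S hS => ?_, fun S hS heq i j _ hi => ?_, fun S hS => ?_⟩
  · rcases S.eq_empty_or_nonempty with rfl | hne
    · simp
    by_cases huniv : S = Finset.univ
    exacts [huniv ▸ h.1.le, (hlt S hS hne huniv).le]
  · by_contra hj
    exact (hlt S hS ⟨i, hi⟩ (by rintro rfl; exact hj (Finset.mem_univ j))).ne heq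
  · rcases S.eq_empty_or_nonempty with rfl | ⟨i, hi⟩
    · simp
    · rw [show S = Finset.univ from Finset.eq_univ_of_forall fun j => hS rfl hi, h.1]

lemma isSaturated_sumMap_iff {π₁ : ι₁ → β₁} {π₂ : ι₂ → β₂} {S : Finset (ι₁ ⊕ ι₂)} :
    IsSaturated (Sum.map π₁ π₂) S ↔ IsSaturated π₁ S.toLeft ∧ IsSaturated π₂ S.toRight := by
  constructor
  · refine fun h => ⟨fun i j hij hi => ?_, fun i j hij hi => ?_⟩
    · exact Finset.mem_toLeft.2 (h (by simp [hij]) (Finset.mem_toLeft.1 hi))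
    · exact Finset.mem_toRight.2 (h (by simp [hij]) (Finset.mem_toRight.1 hi))
  · rintro ⟨h₁, h₂⟩ (i | i) (j | j) hij hi <;>
      simp only [Sum.map_inl, Sum.map_inr, Sum.inl.injEq, Sum.inr.injEq, reduceCtorEq] at hij
    · exact Finset.mem_toLeft.1 (h₁ hij (Finset.mem_toLeft.2 hi))
    · exact Finset.mem_toRight.1 (h₂ hij (Finset.mem_toRight.2 hi))

lemma BlockMaj.sum [Preorder ι₁] [Preorder ι₂] {π₁ : ι₁ → β₁} {π₂ : ι₂ → β₂}
    {x y : ι₁ ⊕ ι₂ → ℝ} (h₁ : BlockMaj π₁ (x ∘ Sum.inl) (y ∘ Sum.inl))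
    (h₂ : BlockMaj π₂ (x ∘ Sum.inr) (y ∘ Sum.inr)) : BlockMaj (Sum.map π₁ π₂) x y := by
  have hlow {S : Finset (ι₁ ⊕ ι₂)} (hS : IsLowerSet (S : Set (ι₁ ⊕ ι₂))) :
      IsLowerSet (S.toLeft : Set ι₁) ∧ IsLowerSet (S.toRight : Set ι₂) := by
    refine ⟨fun i j hji hi => ?_, fun i j hji hi => ?_⟩
    · exact Finset.mem_toLeft.2 (hS (Sum.inl_le_inl_iff.2 hji) (Finset.mem_toLeft.1 hi))
    · exact Finset.mem_toRight.2 (hS (Sum.inr_le_inr_iff.2 hji) (Finset.mem_toRight.1 hi))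
  have hsum (z : ι₁ ⊕ ι₂ → ℝ) (S : Finset (ι₁ ⊕ ι₂)) : ∑ i ∈ S, z i =
      ∑ i ∈ S.toLeft, (z ∘ Sum.inl) i + ∑ i ∈ S.toRight, (z ∘ Sum.inr) i :=
    Finset.sum_sum_eq_sum_toLeft_add_sum_toRight S z
  refine ⟨fun S hS => ?_, fun S hS heq => ?_, fun S hS => ?_⟩
  · rw [hsum x, hsum y]
    exact add_le_add (h₁.sum_le _ (hlow hS).1) (h₂.sum_le _ (hlow hS).2)
  · rw [hsum x, hsum y,
      add_eq_add_iff_eq_and_eq (h₁.sum_le _ (hlow hS).1) (h₂.sum_le _ (hlow hS).2)] at heq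
    exact isSaturated_sumMap_iff.2
      ⟨h₁.isSaturated _ (hlow hS).1 heq.1, h₂.isSaturated _ (hlow hS).2 heq.2⟩
  · obtain ⟨hS₁, hS₂⟩ := isSaturated_sumMap_iff.1 hS
    rw [hsum x, hsum y, h₁.sum_eq _ hS₁, h₂.sum_eq _ hS₂]

lemma BlockMaj.of_equiv [Preorder ι] [Preorder ι₁] {π : ι → β} {π₁ : ι₁ → β₁} {x y : ι → ℝ}
    (e : ι₁ ≃ ι) (he : Monotone e) (hπ : ∀ i j, π (e i) = π (e j) ↔ π₁ i = π₁ j)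
    (h : BlockMaj π₁ (x ∘ e) (y ∘ e)) : BlockMaj π x y := by
  have hsum (z : ι → ℝ) (S : Finset ι) :
      ∑ i ∈ S.map e.symm.toEmbedding, (z ∘ e) i = ∑ i ∈ S, z i := by simp
  have hmem {S : Finset ι} {i : ι₁} : i ∈ S.map e.symm.toEmbedding ↔ e i ∈ S := by
    simp [Finset.mem_map_equiv]
  have hlow {S : Finset ι} (hS : IsLowerSet (S : Set ι)) :
      IsLowerSet (S.map e.symm.toEmbedding : Set ι₁) := fun i j hji hi =>
    hmem.2 (hS (he hji) (hmem.1 hi))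
  refine ⟨fun S hS => ?_, fun S hS heq i j hij hi => ?_, fun S hS => ?_⟩
  · simpa only [hsum] using h.sum_le _ (hlow hS)
  · rw [← hsum x, ← hsum y] at heq
    obtain ⟨i, rfl⟩ := e.surjective i
    obtain ⟨j, rfl⟩ := e.surjective j
    exact hmem.1 (h.isSaturated _ (hlow hS) heq ((hπ i j).1 hij) (hmem.2 hi))
  · rw [← hsum x, ← hsum y]
    exact h.sum_eq _ fun i j hij hi => hmem.2 (hS ((hπ i j).2 hij) (hmem.1 hi))

/-- The positions before `d` and those from `d` on, as in the definition of `K_d(y)`. -/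
def finBlockEquiv {n d : ℕ} (hd : d ≤ n) : Fin d ⊕ Fin (n - d) ≃ Fin n :=
  finSumFinEquiv.trans (finCongr (by omega))

lemma blockMaj_of_mem_Kd {n d : ℕ} (hd : d < n) (hd0 : 0 < d) {x y : Fin n → ℝ} (hy : Antitone y)
    (hx : x ∈ Kd y d hd.le) :
    BlockMaj (· ≤ (⟨d - 1, by omega⟩ : Fin n)) x y := by
  have hy₁ : Antitone (take y d hd.le) := fun i j hij => hy hij
  have hy₂ : Antitone (drop y d) := fun i j hij => hy (Nat.add_le_add_left hij d)
  refine BlockMaj.of_equiv (finBlockEquiv hd.le) ?_ ?_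
    (BlockMaj.sum (hx.2.1.blockMaj hy₁) (hx.2.2.blockMaj hy₂))
  · rintro (i | i) (j | j) hij
    · have hij : i ≤ j := Sum.inl_le_inl_iff.1 hij
      exact hij
    · exact (Sum.not_inl_le_inr hij).elim
    · exact (Sum.not_inr_le_inl hij).elim
    · have hij : i ≤ j := Sum.inr_le_inr_iff.1 hij
      exact Nat.add_le_add_left hij d
  · rintro (i | i) (j | j) <;> simp [finBlockEquiv, Fin.le_def] <;> omega

end Blocks

/-! ### A member of `K_d(y)` -/

section Average

lemma card_mul_sum_lt {ι : Type*} [Fintype ι] {w : ι → ℝ} {S : Finset ι}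
    (hS : ∀ p ∈ S, ∀ q ∉ S, w q ≤ w p) {p q : ι} (hp : p ∈ S) (hq : q ∉ S) (hpq : w q < w p) :
    S.card * ∑ i, w i < Fintype.card ι * ∑ i ∈ S, w i := by
  classical
  have hlt : ∑ a ∈ S ×ˢ Sᶜ, w a.2 < ∑ a ∈ S ×ˢ Sᶜ, w a.1 := by
    refine Finset.sum_lt_sum (fun a ha => ?_) ⟨(p, q), by simp [hp, hq], hpq⟩
    rw [Finset.mem_product, Finset.mem_compl] at ha
    exact hS _ ha.1 _ ha.2
  simp only [Finset.sum_product, Finset.sum_const, nsmul_eq_mul, ← Finset.mul_sum] at hlt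
  have hcard : (S.card : ℝ) + (Sᶜ).card = Fintype.card ι := mod_cast S.card_add_card_compl
  have hsum := Finset.sum_add_sum_compl S w
  rw [← hsum, ← hcard]
  linarith

lemma sMaj_average {m : ℕ} {w : Fin m → ℝ} (hw : Antitone w) {i j : Fin m} (hij : w j < w i) :
    SMaj (fun _ => (∑ t, w t) / m) w := by
  have hm : 0 < (m : ℝ) := Nat.cast_pos.2 i.pos
  refine ⟨by simp [mul_div_cancel₀ _ hm.ne'], fun l hl1 hlm => ?_⟩
  obtain ⟨S, hlow, rfl, hmax⟩ := exists_isLowerSet_card_eq hw (l := l) (by simp; omega)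
  obtain ⟨p, hp⟩ : S.Nonempty := Finset.card_pos.1 hl1
  obtain ⟨q, hq⟩ : ∃ q, q ∉ S := by
    by_contra! hS
    rw [Finset.eq_univ_of_forall hS, Finset.card_univ, Fintype.card_fin] at hlm
    omega
  have hlt := card_mul_sum_lt hmax (hlow (min_le_left p i) hp)
    (fun h => hq (hlow (le_max_left q j) h))
    ((hw (le_max_right q j)).trans_lt (hij.trans_le (hw (min_le_right p i))))
  rw [Fintype.card_fin] at hlt
  have havg : eSum (fun _ : Fin m => (∑ t, w t) / m) S.card = S.card * ((∑ t, w t) / m) := by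
    simpa using eSum_eq_sum (Equiv.refl _) (X := fun _ => (∑ t, w t) / m) (S := S) (by simp)
  have hsum : eSum w S.card = ∑ t ∈ S, w t := eSum_eq_sum (Equiv.refl _) hmax
  rwa [havg, hsum, ← mul_div_assoc, div_lt_iff₀' hm]

variable {n d : ℕ} {y : Fin n → ℝ}

lemma sum_take_add_sum_drop (hd : d ≤ n) (x : Fin n → ℝ) :
    ∑ i, take x d hd i + ∑ i, drop x d i = ∑ i, x i := by
  rw [← (finBlockEquiv hd).sum_comp, Fintype.sum_sum_type]
  rfl

lemma eSum_eq_sum_take (hd : d ≤ n) (hy : Antitone y) : eSum y d = ∑ i, take y d hd i := by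
  have h := eSum_eq_sum (Equiv.refl _) (X := y)
    (S := Finset.univ.map (Fin.castLEEmb hd)) fun p hp q hq => hy ?_
  · rwa [Finset.card_map, Finset.card_univ, Fintype.card_fin, Finset.sum_map] at h
  · obtain ⟨i, -, rfl⟩ := Finset.mem_map.1 hp
    by_contra! hqi
    exact hq (Finset.mem_map.2 ⟨⟨q, lt_trans hqi i.2⟩, Finset.mem_univ _, rfl⟩)

lemma yvec_of_lt (hd : d ≤ n) (hy : Antitone y) {i : Fin n} (hi : i < d) :
    yvec y d i = (∑ j, take y d hd j) / d := by
  rw [yvec, if_pos hi, eSum_eq_sum_take hd hy]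

lemma yvec_of_le (hd : d ≤ n) (hy : y ∈ Vn n) {i : Fin n} (hi : d ≤ i) :
    yvec y d i = (∑ j, drop y d j) / (n - d : ℕ) := by
  rw [yvec, if_neg hi.not_gt, eSum_eq_sum_take hd hy.2.2, ← hy.2.1, ← sum_take_add_sum_drop hd y,
    add_sub_cancel_left, Nat.cast_sub hd]

lemma antitone_yvec (hd : d < n) (hd0 : 0 < d) (hy : y ∈ Vn n) : Antitone (yvec y d) := by
  have htake : y ⟨d, hd⟩ ≤ (∑ i, take y d hd.le i) / d := by
    rw [le_div_iff₀ (by exact_mod_cast hd0), mul_comm]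
    simpa using Finset.univ.card_nsmul_le_sum (take y d hd.le) _ fun i _ => hy.2.2 i.2.le
  have hdrop : (∑ i, drop y d i) / (n - d : ℕ) ≤ y ⟨d, hd⟩ := by
    rw [div_le_iff₀ (by exact_mod_cast Nat.sub_pos_of_lt hd), mul_comm]
    simpa using Finset.univ.sum_le_card_nsmul (drop y d) _
      fun i _ => hy.2.2 (Nat.le_add_right d i)
  intro i j hij
  rcases lt_or_ge (i : ℕ) d with hi | hi <;> rcases lt_or_ge (j : ℕ) d with hj | hj
  · rw [yvec_of_lt hd.le hy.2.2 hi, yvec_of_lt hd.le hy.2.2 hj]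
  · rw [yvec_of_lt hd.le hy.2.2 hi, yvec_of_le hd.le hy hj]
    exact hdrop.trans htake
  · exact absurd (hi.trans hij) hj.not_ge
  · rw [yvec_of_le hd.le hy hi, yvec_of_le hd.le hy hj]

lemma yvec_mem_Kd (hd : d < n) (hy : y ∈ Vn n)
    (hne1 : y ⟨d - 1, by omega⟩ < y ⟨0, by omega⟩)
    (hne2 : y ⟨n - 1, by omega⟩ < y ⟨d, hd⟩) : yvec y d ∈ Kd y d hd.le := by
  have hd0 : 0 < d := by
    by_contra! h
    simp [Nat.le_zero.1 h] at hne1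
  have hya := hy.2.2
  have htake : SMaj (take (yvec y d) d hd.le) (take y d hd.le) := by
    rw [show take (yvec y d) d hd.le = fun _ => _ from
      funext fun i => yvec_of_lt hd.le hya i.2]
    exact sMaj_average (fun i j hij => hya hij) (i := ⟨0, hd0⟩) (j := ⟨d - 1, by omega⟩) hne1
  have hdrop : SMaj (drop (yvec y d) d) (drop y d) := by
    rw [show drop (yvec y d) d = fun _ => _ from
      funext fun i => yvec_of_le hd.le hy (Nat.le_add_right d i)]
    refine sMaj_average (fun i j hij => hya (Nat.add_le_add_left hij d)) (i := ⟨0, by omega⟩)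
      (j := ⟨n - 1 - d, by omega⟩) ?_
    simpa [drop, Nat.add_sub_cancel' (Nat.le_sub_one_of_lt hd)] using hne2
  refine ⟨⟨fun i => ?_, ?_, antitone_yvec hd hd0 hy⟩, htake, hdrop⟩
  · rcases lt_or_ge (i : ℕ) d with hi | hi
    · rw [yvec_of_lt hd.le hya hi]
      exact div_nonneg (Finset.sum_nonneg fun j _ => hy.1 _) (Nat.cast_nonneg _)
    · rw [yvec_of_le hd.le hy hi]
      exact div_nonneg (Finset.sum_nonneg fun j _ => hy.1 _) (Nat.cast_nonneg _)
  · rw [← sum_take_add_sum_drop hd.le, htake.1, hdrop.1, sum_take_add_sum_drop, hy.2.1]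

end Average

/-! ### Two blocks -/

lemma exists_common_ratio {K : ℕ} {a b g z : ℝ} (hb : 0 ≤ b) (hba : b < a) (hz : 0 ≤ z)
    (hzg : z < g) (htop : b ^ (K + 1) < a ^ K * g) (hbot : z ^ K * b < g ^ (K + 1)) :
    ∃ r, 0 < r ∧ r < 1 ∧ b < r * a ∧ z < r * g ∧ r ^ K * b < g := by
  have ha : 0 < a := hb.trans_lt hba
  have hg : 0 < g := hz.trans_lt hzg
  obtain ⟨m, hm⟩ : ∃ m, m = max (b / a) (z / g) := ⟨_, rfl⟩
  have hm1 : m < 1 := hm ▸ max_lt ((div_lt_one ha).2 hba) ((div_lt_one hg).2 hzg)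
  have hmid : m ^ K * b < g := by
    rcases max_choice (b / a) (z / g) with h | h
    · rw [hm, h, div_pow, div_mul_eq_mul_div, div_lt_iff₀ (pow_pos ha K), ← pow_succ, mul_comm g]
      exact htop
    · rwa [hm, h, div_pow, div_mul_eq_mul_div, div_lt_iff₀ (pow_pos hg K), ← pow_succ']
  have hnear : ∀ᶠ r in nhds m, r < 1 ∧ r ^ K * b < g := (eventually_lt_nhds hm1).and
    (((continuous_pow K).mul_const b).continuousAt.eventually_lt_const hmid)
  obtain ⟨r, ⟨hr1, hr⟩, hmr⟩ :=
    ((hnear.filter_mono nhdsWithin_le_nhds).and (self_mem_nhdsWithin (s := Set.Ioi m))).exists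
  obtain ⟨hbr, hzr⟩ : b / a < r ∧ z / g < r := max_lt_iff.1 (hm ▸ hmr)
  exact ⟨r, (div_nonneg hb ha.le).trans_lt hbr, hr1, (div_lt_iff₀ ha).1 hbr,
    (div_lt_iff₀ hg).1 hzr, hr⟩

lemma pow_mul_lt_of_forall_exists {K L : ℕ} (hKL : K ≤ L) {u : Fin (K + 1) → ℝ} (hu : Antitone u)
    (hu0 : ∀ j, 0 < u j) {σ τ β γ : ℝ} (hσ : 0 ≤ σ) (hστ : σ ≤ τ) (hτ : 0 < τ) (hβ : 0 ≤ β)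
    (h : ∀ j, β * u j < γ * u 0 ∨ ∃ i, j < i ∧ σ * u j < τ * u i) :
    σ ^ L * β < τ ^ L * γ := by
  -- Otherwise only the second alternative of `h` is left, and it has no room at `Fin.last K`.
  by_contra! hcon
  have hfirst (j : Fin (K + 1)) (hj : σ ^ (j : ℕ) * u 0 ≤ τ ^ (j : ℕ) * u j) :
      γ * u 0 ≤ β * u j := by
    obtain ⟨r, rfl⟩ := Nat.exists_eq_add_of_le (j.is_le.trans hKL)
    refine le_of_mul_le_mul_left ?_ (pow_pos hτ (j + r))
    calc τ ^ (j + r) * (γ * u 0) = τ ^ (j + r) * γ * u 0 := by ring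
      _ ≤ σ ^ (j + r) * β * u 0 := mul_le_mul_of_nonneg_right hcon (hu0 0).le
      _ = σ ^ r * β * (σ ^ (j : ℕ) * u 0) := by ring
      _ ≤ τ ^ r * β * (τ ^ (j : ℕ) * u j) := by
        have := hu0 0
        gcongr
      _ = τ ^ (j + r) * (β * u j) := by ring
  have hstep (j : Fin (K + 1)) (hj : σ ^ (j : ℕ) * u 0 ≤ τ ^ (j : ℕ) * u j) :
      ∃ i, j < i ∧ σ * u j < τ * u i :=
    (h j).resolve_left (hfirst j hj).not_gt
  have hgeom (j : Fin (K + 1)) : σ ^ (j : ℕ) * u 0 ≤ τ ^ (j : ℕ) * u j := by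
    induction j using Fin.induction with
    | zero => simp
    | succ j ih =>
      obtain ⟨i, hji, hi⟩ := hstep _ ih
      calc σ ^ (j.succ : ℕ) * u 0 = σ * (σ ^ (j.castSucc : ℕ) * u 0) := by
            rw [Fin.val_succ, Fin.val_castSucc]; ring
        _ ≤ σ * (τ ^ (j.castSucc : ℕ) * u j.castSucc) := by gcongr
        _ = τ ^ (j.castSucc : ℕ) * (σ * u j.castSucc) := by ring
        _ ≤ τ ^ (j.castSucc : ℕ) * (τ * u j.succ) := by
          refine mul_le_mul_of_nonneg_left (hi.le.trans ?_) (pow_nonneg hτ.le _)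
          exact mul_le_mul_of_nonneg_left (hu (Fin.castSucc_lt_iff_succ_le.1 hji)) hτ.le
        _ = τ ^ (j.succ : ℕ) * u j.succ := by rw [Fin.val_succ, Fin.val_castSucc]; ring
  obtain ⟨i, hi, -⟩ := hstep _ (hgeom (Fin.last K))
  exact hi.not_ge (Fin.le_last i)

lemma prod_ite_val_lt {M : Type*} [CommMonoid M] (u v : M) {p k : ℕ} (hp : p ≤ k) :
    ∏ j : Fin k, (if (j : ℕ) < p then u else v) = u ^ p * v ^ (k - p) := by
  obtain ⟨q, rfl⟩ := Nat.exists_eq_add_of_le hp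
  rw [Fin.prod_univ_add]
  simp

lemma pow_mul_pow_lt_pow_mul_pow {a b g z r : ℝ} (hb : 0 ≤ b) (hz : 0 ≤ z) (hr : 0 < r)
    (hba : b < r * a) (hzg : z < r * g) {p q : ℕ} (hmid : r ^ (p + q) * b < g) :
    z ^ p * b ^ (q + 1) < g ^ (p + 1) * a ^ q := by
  have ha : 0 < a := pos_of_mul_pos_right (hb.trans_lt hba) hr.le
  have hg : 0 < g := pos_of_mul_pos_right (hz.trans_lt hzg) hr.le
  calc z ^ p * b ^ (q + 1) = z ^ p * b ^ q * b := by ring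
    _ ≤ (r * g) ^ p * (r * a) ^ q * b := by gcongr
    _ = g ^ p * a ^ q * (r ^ (p + q) * b) := by ring
    _ < g ^ p * a ^ q * g := by gcongr
    _ = g ^ (p + 1) * a ^ q := by ring

section TwoBlocks

variable {ι : Type*} [LinearOrder ι] [BoundedOrder ι] {s t : ι} {x y : ι → ℝ} {N K : ℕ}

lemma BlockMaj.pos [Finite ι] (h : BlockMaj (· ≤ s) x y) (hx : Antitone x) (hy : ∀ i, 0 ≤ y i)
    (hst : s < t) (ht : t < ⊤) (i : ι) : 0 < x i := by
  have := Fintype.ofFinite ι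
  have hlow : IsLowerSet (Finset.univ.erase (⊤ : ι) : Set ι) := fun i j hji hi => by
    have hi : i < ⊤ := lt_top_iff_ne_top.2 (by simpa using hi)
    simpa using (hji.trans_lt hi).ne
  have hne : ∑ i ∈ Finset.univ.erase ⊤, x i ≠ ∑ i ∈ Finset.univ.erase ⊤, y i := fun heq => by
    have htop : (⊤ : ι) ∈ Finset.univ.erase ⊤ := h.isSaturated _ hlow heq
      (propext (iff_of_false hst.not_ge (hst.trans ht).not_ge)) (by simpa using ht.ne)
    simp at htop
  have hlt := (h.sum_le _ hlow).lt_of_ne hne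
  have hsum := h.sum_eq _ (isSaturated_univ _)
  rw [← Finset.add_sum_erase _ x (Finset.mem_univ ⊤),
    ← Finset.add_sum_erase _ y (Finset.mem_univ ⊤)] at hsum
  linarith [hy ⊤, hx (le_top : i ≤ ⊤)]

lemma mem_of_isSaturated_prod {c : Fin (K + 1) → ℝ} {S : Finset (ι × Fin (K + 1))}
    (hst : s ⋖ t) (hlow : IsLowerSet (S : Set (ι × Fin (K + 1))))
    (hsat : IsSaturated (Prod.map (· ≤ s) id) S) (hne : S.Nonempty)
    (hclosed : ∀ p ∈ S, ∀ q, outer y c p < outer y c q → q ∈ S)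
    (htop : ∀ j : Fin K, y s * c j.castSucc < y ⊥ * c j.succ)
    (hbot : ∀ j : Fin K, y ⊤ * c j.castSucc < y t * c j.succ)
    (hmid : y s * c (Fin.last K) < y t * c 0) (p : ι × Fin (K + 1)) : p ∈ S := by
  have hblock {i i' : ι} {j : Fin (K + 1)} (hi : i ≤ s ↔ i' ≤ s) (h : (i, j) ∈ S) : (i', j) ∈ S :=
    hsat (by simp [hi]) h
  have hbotS (j : Fin (K + 1)) : (⊥, j) ∈ S := by
    induction j using Fin.induction with
    | zero =>
      obtain ⟨p, hp⟩ := hne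
      exact hlow (Prod.mk_le_mk.2 ⟨bot_le, Fin.zero_le _⟩ : ((⊥ : ι), (0 : Fin (K + 1))) ≤ p) hp
    | succ j ih => exact hclosed _ (hblock (i' := s) (by simp) ih) _ (htop j)
  have htS (j : Fin (K + 1)) : (t, j) ∈ S := by
    induction j using Fin.induction with
    | zero => exact hclosed _ (hblock (i' := s) (by simp) (hbotS (Fin.last K))) _ hmid
    | succ j ih =>
      exact hclosed _ (hblock (i' := ⊤)
        (iff_of_false hst.lt.not_ge (hst.lt.trans_le le_top).not_ge) ih) _ (hbot j)
  obtain ⟨i, j⟩ := p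
  by_cases hi : i ≤ s
  · exact hblock (iff_of_true bot_le hi) (hbotS j)
  · exact hblock (iff_of_false hst.lt.not_ge hi) (htS j)

lemma BlockMaj.exists_sMaj_outer (h : BlockMaj (· ≤ s) x y) (e : ι × Fin (K + 1) ≃ Fin N)
    (hx : Antitone x) (hx0 : ∀ i, 0 ≤ x i) (hst : s ⋖ t) {r : ℝ} (hr0 : 0 < r) (hr1 : r < 1)
    (htop : y s < r * y ⊥) (hbot : y ⊤ < r * y t) (hmid : r ^ K * y s < y t) :
    ∃ c : Fin (K + 1) → ℝ, (∀ j, 0 < c j) ∧ ∑ j, c j = 1 ∧ Antitone c ∧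
      SMaj (outer x c ∘ e.symm) (outer y c ∘ e.symm) := by
  obtain ⟨w, hw⟩ : ∃ w, w = ∑ j : Fin (K + 1), r ^ (j : ℕ) := ⟨_, rfl⟩
  have hw0 : 0 < w := hw ▸ Finset.sum_pos (fun j _ => pow_pos hr0 _) Finset.univ_nonempty
  obtain ⟨c, hc⟩ : ∃ c : Fin (K + 1) → ℝ, ∀ j, c j = r ^ (j : ℕ) / w := ⟨_, fun _ => rfl⟩
  have hc0 (j : Fin (K + 1)) : 0 < c j := hc j ▸ div_pos (pow_pos hr0 _) hw0
  have hanti : Antitone c := fun i j hij => by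
    rw [hc, hc]
    exact div_le_div_of_nonneg_right (pow_le_pow_of_le_one hr0.le hr1.le hij) hw0.le
  have hstep {u v : ℝ} (huv : u < r * v) (j : Fin K) : u * c j.castSucc < v * c j.succ := by
    calc u * c j.castSucc < r * v * c j.castSucc := mul_lt_mul_of_pos_right huv (hc0 _)
      _ = v * c j.succ := by rw [hc, hc, Fin.val_succ, Fin.val_castSucc, pow_succ]; ring
  have hlast : y s * c (Fin.last K) < y t * c 0 := by
    rw [hc, hc, Fin.val_last, Fin.val_zero, pow_zero, ← mul_div_assoc, ← mul_div_assoc, mul_one,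
      mul_comm]
    exact div_lt_div_of_pos_right hmid hw0
  refine ⟨c, hc0, ?_, hanti, (h.outer_right hc0).sMaj
    (antitone_outer hx hx0 hanti fun j => (hc0 j).le) e fun S hlow hsat hne hclosed =>
      mem_of_isSaturated_prod hst hlow hsat hne hclosed (hstep htop) (hstep hbot) hlast⟩
  rw [Finset.sum_congr rfl fun j _ => hc j, ← Finset.sum_div, ← hw, div_self hw0.ne']

lemma mem_of_isSaturated_pi {S : Finset (Fin (K + 1) → ι)} (hst : s ⋖ t)
    (hlow : IsLowerSet (S : Set (Fin (K + 1) → ι))) (hsat : IsSaturated (fun f j => f j ≤ s) S)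
    (hne : S.Nonempty)
    (hclosed : ∀ f ∈ S, ∀ g, piProd (fun _ => y) f < piProd (fun _ => y) g → g ∈ S)
    (hlt : ∀ p q, p + q = K → y ⊤ ^ p * y s ^ (q + 1) < y t ^ (p + 1) * y ⊥ ^ q)
    (f : Fin (K + 1) → ι) : f ∈ S := by
  let P (p : ℕ) (j : Fin (K + 1)) : ι := if (j : ℕ) < p then t else ⊥
  let Q (p : ℕ) (j : Fin (K + 1)) : ι := if (j : ℕ) < p then ⊤ else s
  have hPQ (p : ℕ) (hp : P p ∈ S) : Q p ∈ S := by
    refine hsat (funext fun j => ?_) hp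
    by_cases hj : (j : ℕ) < p
    · simpa only [P, Q, if_pos hj] using
        propext (iff_of_false hst.lt.not_ge (hst.lt.trans_le le_top).not_ge)
    · simpa only [P, Q, if_neg hj] using propext (iff_of_true bot_le le_rfl)
  have hQP (p : ℕ) (hp : p ≤ K) (hQ : Q p ∈ S) : P (p + 1) ∈ S := by
    obtain ⟨q, rfl⟩ := Nat.exists_eq_add_of_le hp
    refine hclosed _ hQ _ ?_
    simp only [piProd, P, Q, apply_ite y]
    rw [prod_ite_val_lt _ _ (by omega), prod_ite_val_lt _ _ (by omega), Nat.add_sub_add_right,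
      Nat.add_assoc, Nat.add_sub_cancel_left, Nat.add_sub_cancel_left]
    exact hlt p q rfl
  have hP (p : ℕ) (hp : p ≤ K + 1) : P p ∈ S := by
    induction p with
    | zero =>
      obtain ⟨f, hf⟩ := hne
      exact hlow (fun j => bot_le : P 0 ≤ f) hf
    | succ p ih => exact hQP p (by omega) (hPQ p (ih (by omega)))
  have hQtop : Q (K + 1) = ⊤ := funext fun j => if_pos j.2
  exact hlow (hQtop ▸ le_top) (hPQ _ (hP _ le_rfl))

lemma BlockMaj.sMaj_piProd (h : BlockMaj (· ≤ s) x y) (e : (Fin (K + 1) → ι) ≃ Fin N)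
    (hx : Antitone x) (hx0 : ∀ i, 0 < x i) (hy0 : ∀ i, 0 ≤ y i) (hst : s ⋖ t) {r : ℝ} (hr : 0 < r)
    (htop : y s < r * y ⊥) (hbot : y ⊤ < r * y t) (hmid : r ^ K * y s < y t) :
    SMaj (piProd (fun _ => x) ∘ e.symm) (piProd (fun _ => y) ∘ e.symm) := by
  refine (BlockMaj.piProd_of_pos (fun _ => h) (fun _ => hx0) (fun _ => hy0)).sMaj
    (antitone_piProd (fun _ => hx) fun _ i => (hx0 i).le) e fun S hlow hsat hne hclosed =>
    mem_of_isSaturated_pi hst hlow hsat hne hclosed fun p q hpq => ?_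
  subst hpq
  exact pow_mul_pow_lt_pow_mul_pow (hy0 _) (hy0 _) hr htop hbot hmid

lemma BlockMaj.pow_lt_of_sMaj_outer (h : BlockMaj (· ≤ s) x y) (hst : s ⋖ t) (hy : Antitone y)
    (hy0 : ∀ i, 0 ≤ y i) (hyt : 0 < y t) {c : Fin (K + 1) → ℝ} (hc : Antitone c)
    (hc0 : ∀ j, 0 < c j) {e : ι × Fin (K + 1) ≃ Fin N}
    (hmaj : SMaj (outer x c ∘ e.symm) (outer y c ∘ e.symm)) {L : ℕ} (hKL : K ≤ L) :
    y s ^ (L + 1) < y ⊥ ^ L * y t := by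
  have hbot : 0 < y ⊥ := hyt.trans_le (hy bot_le)
  rw [pow_succ]
  refine pow_mul_lt_of_forall_exists hKL hc hc0 (hy0 s) (hy bot_le) hbot (hy0 s) fun j => ?_
  obtain ⟨⟨i, k⟩, hp, ⟨i', k'⟩, hq, hlt⟩ := (h.outer_right hc0).exists_lt_of_sMaj hmaj
    (P := fun p => p.1 ≤ s ∧ p.2 ≤ j)
    (fun p q hpq hp => by
      obtain ⟨h1, h2⟩ : (p.1 ≤ s) = (q.1 ≤ s) ∧ p.2 = q.2 := Prod.ext_iff.1 hpq
      simpa only [h1, h2] using hp)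
    (p := (s, j)) (q := (t, j)) (by simp) (by simpa using hst.lt)
  simp only [not_and] at hp hq
  have hle : y s * c j ≤ y i * c k := mul_le_mul (hy hp.1) (hc hp.2) (hc0 _).le (hy0 _)
  by_cases hi' : i' ≤ s
  · exact Or.inr ⟨k', not_le.1 (hq hi'), hle.trans_lt
      (hlt.trans_le (mul_le_mul_of_nonneg_right (hy bot_le) (hc0 _).le))⟩
  · exact Or.inl (hle.trans_lt (hlt.trans_le
      (mul_le_mul (hy (hst.ge_of_gt (not_le.1 hi'))) (hc (Fin.zero_le _)) (hc0 _).le (hy0 _))))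

lemma BlockMaj.lt_pow_of_sMaj_outer (h : BlockMaj (· ≤ s) x y) (hst : s ⋖ t) (hy : Antitone y)
    (hy0 : ∀ i, 0 ≤ y i) (hyt : 0 < y t) {c : Fin (K + 1) → ℝ} (hc : Antitone c)
    (hc0 : ∀ j, 0 < c j) {e : ι × Fin (K + 1) ≃ Fin N}
    (hmaj : SMaj (outer x c ∘ e.symm) (outer y c ∘ e.symm)) {L : ℕ} (hKL : K ≤ L) :
    y ⊤ ^ L * y s < y t ^ (L + 1) := by
  -- Reversing the order of the products exchanges the blocks and replaces `c` by `1 / c` backwards.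
  have hu : Antitone fun j : Fin (K + 1) => (c j.rev)⁻¹ := fun i j hij =>
    inv_anti₀ (hc0 _) (hc (Fin.rev_le_rev.2 hij))
  rw [pow_succ]
  refine pow_mul_lt_of_forall_exists hKL hu (fun j => inv_pos.2 (hc0 _)) (hy0 ⊤) (hy le_top) hyt
    (hy0 s) fun j => ?_
  obtain ⟨⟨i, k⟩, hp, ⟨i', k'⟩, hq, hlt⟩ := (h.outer_right hc0).exists_lt_of_sMaj hmaj
    (P := fun p => p.1 ≤ s ∨ p.2 < j.rev)
    (fun p q hpq hp => by
      obtain ⟨h1, h2⟩ : (p.1 ≤ s) = (q.1 ≤ s) ∧ p.2 = q.2 := Prod.ext_iff.1 hpq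
      simpa only [h1, h2] using hp)
    (p := (s, j)) (q := (t, j.rev)) (by simp) (by simpa using hst.lt)
  simp only [not_or, not_le, not_lt] at hp hq
  have hle : y i' * c k' ≤ y t * c j.rev :=
    mul_le_mul (hy (hst.ge_of_gt hq.1)) (hc hq.2) (hc0 _).le (hy0 _)
  simp only [← div_eq_mul_inv, div_lt_div_iff₀ (hc0 _) (hc0 _), Fin.rev_zero]
  rcases hp with hi | hk
  · exact Or.inl ((mul_le_mul (hy hi) (hc (Fin.le_last _)) (hc0 _).le (hy0 _)).trans_lt
      (hlt.trans_le hle))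
  · exact Or.inr ⟨k.rev, Fin.lt_rev_iff.2 hk, by
      rw [Fin.rev_rev]
      exact (mul_le_mul_of_nonneg_right (hy le_top) (hc0 _).le).trans_lt (hlt.trans_le hle)⟩

lemma BlockMaj.pow_lt_of_sMaj_piProd (h : BlockMaj (· ≤ s) x y) (hst : s ⋖ t) (hy : Antitone y)
    (hx0 : ∀ i, 0 < x i) (hy0 : ∀ i, 0 ≤ y i) {e : (Fin (K + 1) → ι) ≃ Fin N}
    (hmaj : SMaj (piProd (fun _ => x) ∘ e.symm) (piProd (fun _ => y) ∘ e.symm)) :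
    y s ^ (K + 1) < y ⊥ ^ K * y t := by
  obtain ⟨f, hf, g, hg, hlt⟩ :=
    (BlockMaj.piProd_of_pos (fun _ => h) (fun _ => hx0) (fun _ => hy0)).exists_lt_of_sMaj hmaj
      (P := fun f => ∀ j, f j ≤ s) (fun f g hfg hf => fun j => (congrFun hfg j).mp (hf j))
      (p := fun _ => s) (q := fun _ => t) (by simp) (by simpa using hst.lt)
  simp only [not_forall, not_le] at hf hg
  obtain ⟨m, hm⟩ := hg
  calc y s ^ (K + 1) = ∏ _j : Fin (K + 1), y s := by simp
    _ ≤ piProd (fun _ => y) f := Finset.prod_le_prod (fun _ _ => hy0 _) fun j _ => hy (hf j)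
    _ < piProd (fun _ => y) g := hlt
    _ ≤ y ⊥ ^ K * y (g m) := piProd_const_le hy hy0 g m
    _ ≤ y ⊥ ^ K * y t := mul_le_mul_of_nonneg_left (hy (hst.ge_of_gt hm)) (pow_nonneg (hy0 _) _)

lemma BlockMaj.lt_pow_of_sMaj_piProd (h : BlockMaj (· ≤ s) x y) (hst : s ⋖ t) (hy : Antitone y)
    (hx0 : ∀ i, 0 < x i) (hy0 : ∀ i, 0 ≤ y i) {e : (Fin (K + 1) → ι) ≃ Fin N}
    (hmaj : SMaj (piProd (fun _ => x) ∘ e.symm) (piProd (fun _ => y) ∘ e.symm)) :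
    y ⊤ ^ K * y s < y t ^ (K + 1) := by
  obtain ⟨f, hf, g, hg, hlt⟩ :=
    (BlockMaj.piProd_of_pos (fun _ => h) (fun _ => hx0) (fun _ => hy0)).exists_lt_of_sMaj hmaj
      (P := fun f => ∃ j, f j ≤ s) (fun f g hfg hf => hf.imp fun j => (congrFun hfg j).mp)
      (p := fun _ => s) (q := fun _ => t) (by simp) (by simpa using hst.lt)
  simp only [not_exists, not_le] at hf hg
  obtain ⟨m, hm⟩ := hf
  calc y ⊤ ^ K * y s ≤ y ⊤ ^ K * y (f m) := mul_le_mul_of_nonneg_left (hy hm) (pow_nonneg (hy0 _) _)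
    _ ≤ piProd (fun _ => y) f := le_piProd_const hy hy0 f m
    _ < piProd (fun _ => y) g := hlt
    _ ≤ ∏ _j : Fin (K + 1), y t :=
      Finset.prod_le_prod (fun _ _ => hy0 _) fun j _ => hy (hst.ge_of_gt (hg j))
    _ = y t ^ (K + 1) := by simp

end TwoBlocks

theorem stmt18_general {n : ℕ} (d k : ℕ) (hd : d < n) (hk : 1 ≤ k) (y : Fin n → ℝ) (hy : y ∈ Vn n)
    (hne1 : y ⟨0, by omega⟩ > y ⟨d - 1, by omega⟩) (hne2 : y ⟨d, hd⟩ > y ⟨n - 1, by omega⟩) :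
    ((∀ x ∈ Kd y d hd.le, ∃ (k' : ℕ) (c : Fin k' → ℝ), 0 < k' ∧ k' ≤ k ∧
        (∀ i, 0 < c i) ∧ (∑ i, c i) = 1 ∧ Antitone c ∧
        SMaj (tensor x c) (tensor y c)) ↔
      (y ⟨d - 1, by omega⟩ ^ k < y ⟨0, by omega⟩ ^ (k - 1) * y ⟨d, hd⟩ ∧
       y ⟨d, hd⟩ ^ k > y ⟨n - 1, by omega⟩ ^ (k - 1) * y ⟨d - 1, by omega⟩)) ∧
    ((∀ x ∈ Kd y d hd.le, SMaj (tpow x k) (tpow y k)) ↔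
      (y ⟨d - 1, by omega⟩ ^ k < y ⟨0, by omega⟩ ^ (k - 1) * y ⟨d, hd⟩ ∧
       y ⟨d, hd⟩ ^ k > y ⟨n - 1, by omega⟩ ^ (k - 1) * y ⟨d - 1, by omega⟩)) := by
  obtain ⟨K, rfl⟩ := Nat.exists_eq_add_of_le' hk
  obtain ⟨N, rfl⟩ := Nat.exists_eq_add_of_le' (Nat.one_le_of_lt hd)
  have hd0 : 0 < d := Nat.pos_of_ne_zero fun h => by simp [h] at hne1
  have hst : (⟨d - 1, by omega⟩ : Fin (N + 1)) ⋖ ⟨d, hd⟩ := Fin.covBy_iff.2 (by simp; omega)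
  have ht : (⟨d, hd⟩ : Fin (N + 1)) < ⊤ := hy.2.2.reflect_lt hne2
  have hyt : 0 < y ⟨d, hd⟩ := (hy.1 _).trans_lt hne2
  have hblock {x} (hx : x ∈ Kd y d hd.le) := blockMaj_of_mem_Kd hd hd0 hy.2.2 hx
  have hpos {x} (hx : x ∈ Kd y d hd.le) := (hblock hx).pos hx.1.2.2 hy.1 hst.lt ht
  have hmem : yvec y d ∈ Kd y d hd.le := yvec_mem_Kd hd hy hne1 hne2
  refine ⟨⟨fun h => ?_, fun ⟨h1, h2⟩ x hx => ?_⟩, ⟨fun h => ⟨?_, ?_⟩, fun ⟨h1, h2⟩ x hx => ?_⟩⟩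
  · obtain ⟨k', c, hk'0, hk', hc0, -, hc, hmaj⟩ := h _ hmem
    obtain ⟨L, rfl⟩ := Nat.exists_eq_add_of_le' hk'0
    have hLK : L ≤ K := Nat.succ_le_succ_iff.1 hk'
    exact ⟨(hblock hmem).pow_lt_of_sMaj_outer hst hy.2.2 hy.1 hyt hc hc0 hmaj hLK,
      (hblock hmem).lt_pow_of_sMaj_outer hst hy.2.2 hy.1 hyt hc hc0 hmaj hLK⟩
  · obtain ⟨r, hr0, hr1, htop, hbot, hmid⟩ := exists_common_ratio (hy.1 _) hne1 (hy.1 _) hne2 h1 h2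
    obtain ⟨c, hc⟩ := (hblock hx).exists_sMaj_outer finProdFinEquiv hx.1.2.2
      (fun i => (hpos hx i).le) hst hr0 hr1 htop hbot hmid
    exact ⟨K + 1, c, K.succ_pos, le_rfl, hc⟩
  · exact (hblock hmem).pow_lt_of_sMaj_piProd hst hy.2.2 (hpos hmem) hy.1 (h _ hmem)
  · exact (hblock hmem).lt_pow_of_sMaj_piProd hst hy.2.2 (hpos hmem) hy.1 (h _ hmem)
  · obtain ⟨r, hr0, -, htop, hbot, hmid⟩ := exists_common_ratio (hy.1 _) hne1 (hy.1 _) hne2 h1 h2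
    exact (hblock hx).sMaj_piProd finFunctionFinEquiv hx.1.2.2 (hpos hx) hy.1 hst hr0 htop hbot hmid

/-- Theorem 14 of the paper. The equivalence of:
(1) every `x ∈ K_d(y)` admits a probability catalyst `c` of dimension at most
`k` with positive components such that `x ⊗ c ◁ y ⊗ c`;
(2) every `x ∈ K_d(y)` satisfies `x^{⊗k} ◁ y^{⊗k}`; and
(3) `y_d^k < y_1^{k-1} y_{d+1}` and `y_{d+1}^k > y_n^{k-1} y_d`
(1-based indices in the informal statement, 0-based here). -/
theorem stmt18 {n : ℕ} (d k : ℕ) (hd1 : 1 < d) (hd2 : d + 1 < n) (hk : 1 ≤ k)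
    (y : Fin n → ℝ) (hy : y ∈ Vn n) (hypos : ∀ i, 0 < y i)
    (hne1 : y ⟨0, by omega⟩ > y ⟨d - 1, by omega⟩)
    (hne2 : y ⟨d, by omega⟩ > y ⟨n - 1, by omega⟩) :
    ((∀ x ∈ Kd y d (by omega), ∃ (k' : ℕ) (c : Fin k' → ℝ), 0 < k' ∧ k' ≤ k ∧
        (∀ i, 0 < c i) ∧ (∑ i, c i) = 1 ∧ Antitone c ∧
        SMaj (tensor x c) (tensor y c)) ↔
      (y ⟨d - 1, by omega⟩ ^ k < y ⟨0, by omega⟩ ^ (k - 1) * y ⟨d, by omega⟩ ∧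
       y ⟨d, by omega⟩ ^ k > y ⟨n - 1, by omega⟩ ^ (k - 1) * y ⟨d - 1, by omega⟩)) ∧
    ((∀ x ∈ Kd y d (by omega), SMaj (tpow x k) (tpow y k)) ↔
      (y ⟨d - 1, by omega⟩ ^ k < y ⟨0, by omega⟩ ^ (k - 1) * y ⟨d, by omega⟩ ∧
       y ⟨d, by omega⟩ ^ k > y ⟨n - 1, by omega⟩ ^ (k - 1) * y ⟨d - 1, by omega⟩)) :=
  stmt18_general d k (by omega) hk y hy hne1 hne2

end
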